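/- arXiv:1711.06959 — 7 statements merged into one kernel-verified Lean document; each statement's English description precedes it below -/
import Mathlib

section
/- (Theorem 1, Lower & Upper Bounds.) Let X ⊆ ℝ^d be nonempty, let f : ℝ^d → ℝ be Lipschitz continuous with constant L > 0 and nonnegative on X, let 0 ≤ ρ < 1, let x_1, …, x_t ∈ X, and let f* = inf_{x ∈ X} f(x). If X is entirely covered by the removable parameter space, i.e., X ⊆ ⋃_{j=1,…,t} B(x_j, r_j) where r_j = (f(x_j) − ρ·min_{i=1,…,t} f(x_i))/L, then ρ·min_{i=1,…,t} f(x_i) ≤ f* ≤ min_{i=1,…,t} f(x_i). -/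
/-- Theorem 1, Lower & Upper Bounds: Let `X ⊆ ℝ^d` be nonempty,
`f` Lipschitz with constant `L > 0` and nonnegative on `X`, `0 ≤ ρ < 1`,
samples `x_1, …, x_t ∈ X` (1-indexed), `m = min_{i=1,…,t} f(x_i)`, and
`f* = inf_{x ∈ X} f(x)`. If `X ⊆ ⋃_{j=1,…,t} B(x_j, r_j)` with
`r_j = (f(x_j) − ρ·m)/L`, then `ρ·m ≤ f* ≤ m`. -/
theorem bpgrad_lower_upper_bounds
    {d : ℕ} (X : Set (EuclideanSpace ℝ (Fin d))) (hX : X.Nonempty)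
    (f : EuclideanSpace ℝ (Fin d) → ℝ) (L : ℝ) (hL : 0 < L)
    (hf : ∀ x y : EuclideanSpace ℝ (Fin d), |f x - f y| ≤ L * ‖x - y‖)
    (hf0 : ∀ x ∈ X, 0 ≤ f x)
    (ρ : ℝ) (hρ0 : 0 ≤ ρ) (hρ1 : ρ < 1)
    (t : ℕ) (ht : 1 ≤ t) (x : ℕ → EuclideanSpace ℝ (Fin d))
    (hxX : ∀ i, 1 ≤ i → i ≤ t → x i ∈ X)
    (m : ℝ) (hm : m = (Finset.Icc 1 t).inf' (Finset.nonempty_Icc.mpr ht) fun i => f (x i))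
    (fstar : ℝ) (hfstar : fstar = sInf (f '' X))
    (hcover : X ⊆ ⋃ j ∈ Finset.Icc 1 t, Metric.ball (x j) ((f (x j) - ρ * m) / L)) :
    ρ * m ≤ fstar ∧ fstar ≤ m := by
  subst hfstar
  constructor
  · apply le_csInf (hX.image f)
    rintro _ ⟨y, hy, rfl⟩
    have h := hcover hy
    simp only [Set.mem_iUnion] at h
    obtain ⟨j, _, hj⟩ := h
    rw [Metric.mem_ball, dist_comm, dist_eq_norm, lt_div_iff₀ hL] at hj
    have h1 := (abs_le.mp (hf (x j) y)).2
    linarith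
  · rw [hm]
    apply Finset.le_inf'
    intro i hi
    rw [Finset.mem_Icc] at hi
    refine csInf_le ⟨0, ?_⟩ ⟨x i, hxX i hi.1 hi.2, rfl⟩
    rintro _ ⟨y, hy, rfl⟩
    exact hf0 y hy
end

section
/- (Corollary, Approximation Error Bound.) Let X ⊆ ℝ^d be nonempty, let f : ℝ^d → ℝ be Lipschitz continuous with constant L > 0 and nonnegative on X, let 0 ≤ ρ < 1, let ε ≥ 0, let x_1, …, x_t ∈ X, and let f* = inf_{x ∈ X} f(x). Suppose both (i) min_{i=1,…,t} f(x_i) ≤ ε/(1 − ρ), and (ii) X ⊆ ⋃_{j=1,…,t} B(x_j, r_j) where r_j = (f(x_j) − ρ·min_{i=1,…,t} f(x_i))/L. Then min_{i=1,…,t} f(x_i) − f* ≤ ε. -/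
/-- Corollary, Approximation Error Bound: Let `X ⊆ ℝ^d` be nonempty,
`f` Lipschitz with constant `L > 0` and nonnegative on `X`, `0 ≤ ρ < 1`, `ε ≥ 0`,
samples `x_1, …, x_t ∈ X` (1-indexed), `m = min_{i=1,…,t} f(x_i)`, and
`f* = inf_{x ∈ X} f(x)`. If (i) `m ≤ ε/(1 − ρ)` and (ii) `X ⊆ ⋃_{j=1,…,t} B(x_j, r_j)`
with `r_j = (f(x_j) − ρ·m)/L`, then `m − f* ≤ ε`. -/
theorem bpgrad_approximation_error_bound
    {d : ℕ} (X : Set (EuclideanSpace ℝ (Fin d))) (hX : X.Nonempty)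
    (f : EuclideanSpace ℝ (Fin d) → ℝ) (L : ℝ) (hL : 0 < L)
    (hf : ∀ x y : EuclideanSpace ℝ (Fin d), |f x - f y| ≤ L * ‖x - y‖)
    (hf0 : ∀ x ∈ X, 0 ≤ f x)
    (ρ : ℝ) (hρ0 : 0 ≤ ρ) (hρ1 : ρ < 1) (ε : ℝ) (hε : 0 ≤ ε)
    (t : ℕ) (ht : 1 ≤ t) (x : ℕ → EuclideanSpace ℝ (Fin d))
    (hxX : ∀ i, 1 ≤ i → i ≤ t → x i ∈ X)
    (m : ℝ) (hm : m = (Finset.Icc 1 t).inf' (Finset.nonempty_Icc.mpr ht) fun i => f (x i))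
    (fstar : ℝ) (hfstar : fstar = sInf (f '' X))
    (hub : m ≤ ε / (1 - ρ))
    (hcover : X ⊆ ⋃ j ∈ Finset.Icc 1 t, Metric.ball (x j) ((f (x j) - ρ * m) / L)) :
    m - fstar ≤ ε := by
  have h1 : ρ * m ≤ fstar := by
    rw [hfstar]
    apply le_csInf (hX.image f)
    rintro _ ⟨y, hy, rfl⟩
    have h := hcover hy
    simp only [Set.mem_iUnion] at h
    obtain ⟨j, _, hb⟩ := h
    rw [Metric.mem_ball, lt_div_iff₀ hL, dist_comm, dist_eq_norm] at hb
    have h2 := (abs_le.mp (hf (x j) y)).2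
    linarith
  rw [le_div_iff₀ (by linarith)] at hub
  linarith
end

section
/- (Separation of samples, key step of Theorem 2.) Let f : ℝ^d → ℝ be nonnegative and let L > 0, 0 ≤ ρ < 1. Let x_1, …, x_T ∈ ℝ^d (T ≥ 2) be samples satisfying the sampling rule: for every t with 1 ≤ t ≤ T − 1, max_{i=1,…,t} { f(x_i) − L·‖x_i − x_{t+1}‖ } ≤ ρ·min_{i=1,…,t} f(x_i). Set f_min = min_{i=1,…,T} f(x_i). Then for all 1 ≤ j ≤ t ≤ T − 1, one has ‖x_{t+1} − x_j‖ ≥ (1 − ρ)·f_min / L; in particular the samples are pairwise at distance at least (1 − ρ)·f_min / L. -/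
/-- Separation of samples, key step of Theorem 2: Let `f : ℝ^d → ℝ`
be nonnegative, `L > 0`, `0 ≤ ρ < 1`, and let `x_1, …, x_T` (1-indexed, `T ≥ 2`)
satisfy the BPGrad sampling rule: for every `1 ≤ t ≤ T − 1` and every `1 ≤ i ≤ t`,
`f(x_i) − L‖x_i − x_{t+1}‖ ≤ ρ·min_{k=1,…,t} f(x_k)`. With
`f_min = min_{i=1,…,T} f(x_i)`, for all `1 ≤ j ≤ t ≤ T − 1` one has
`‖x_{t+1} − x_j‖ ≥ (1 − ρ)·f_min / L`. -/
theorem bpgrad_sample_separation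
    {d T : ℕ} (hT : 2 ≤ T)
    (f : EuclideanSpace ℝ (Fin d) → ℝ) (hf0 : ∀ x, 0 ≤ f x)
    (L ρ : ℝ) (hL : 0 < L) (hρ0 : 0 ≤ ρ) (hρ1 : ρ < 1)
    (x : ℕ → EuclideanSpace ℝ (Fin d))
    (hrule : ∀ t, ∀ ht : 1 ≤ t, t ≤ T - 1 → ∀ i, 1 ≤ i → i ≤ t →
      f (x i) - L * ‖x i - x (t + 1)‖ ≤
        ρ * ((Finset.Icc 1 t).inf' (Finset.nonempty_Icc.mpr ht) fun k => f (x k)))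
    (fmin : ℝ)
    (hfmin : fmin = (Finset.Icc 1 T).inf'
      (Finset.nonempty_Icc.mpr (by omega)) fun i => f (x i)) :
    ∀ t, 1 ≤ t → t ≤ T - 1 → ∀ j, 1 ≤ j → j ≤ t →
      (1 - ρ) * fmin / L ≤ ‖x (t + 1) - x j‖ := by
  intro t ht htT j hj hjt
  have h1 := hrule t ht htT j hj hjt
  have h2 : ((Finset.Icc 1 t).inf' (Finset.nonempty_Icc.mpr ht) fun k => f (x k)) ≤ f (x j) :=
    Finset.inf'_le (fun k => f (x k)) (Finset.mem_Icc.mpr ⟨hj, hjt⟩)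
  have h3 : fmin ≤ f (x j) := by
    rw [hfmin]
    exact Finset.inf'_le (fun k => f (x k)) (Finset.mem_Icc.mpr ⟨hj, by omega⟩)
  have h4 := mul_le_mul_of_nonneg_left h2 hρ0
  have h5 := mul_le_mul_of_nonneg_left h3 (sub_nonneg.mpr hρ1.le)
  rw [div_le_iff₀ hL, norm_sub_rev]
  linarith
end

section
/- (Theorem 2, Convergence within Finite Samples.) Let d ≥ 1, L > 0, 0 ≤ ρ < 1, let X ⊆ ℝ^d be a measurable set of finite Lebesgue volume V_X, and let f : ℝ^d → ℝ be nonnegative. Suppose x_1, …, x_T ∈ X satisfy the sampling rule: for every t with 1 ≤ t ≤ T − 1, max_{i=1,…,t} { f(x_i) − L·‖x_i − x_{t+1}‖ } ≤ ρ·min_{i=1,…,t} f(x_i). Set f_min = min_{i=1,…,T} f(x_i) and assume f_min > 0 and that the open ball B(x_t, (1−ρ)·f_min/(2L)) is contained in X for each t. Then T ≤ [2L / ((1 − ρ)·f_min)]^d · V_X / C, where C = π^{d/2} / Γ(d/2 + 1). -/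
open MeasureTheory

/-- Theorem 2, Convergence within Finite Samples: Let `d ≥ 1`,
`L > 0`, `0 ≤ ρ < 1`, `X ⊆ ℝ^d` measurable with finite Lebesgue volume, and
`f : ℝ^d → ℝ` nonnegative. Suppose `x_1, …, x_T ∈ X` (1-indexed) satisfy the
BPGrad sampling rule: for every `1 ≤ t ≤ T − 1` and every `1 ≤ i ≤ t`,
`f(x_i) − L‖x_i − x_{t+1}‖ ≤ ρ·min_{k=1,…,t} f(x_k)`. With
`f_min = min_{i=1,…,T} f(x_i) > 0` and `B(x_t, (1−ρ)·f_min/(2L)) ⊆ X` for each `t`,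
one has `T ≤ [2L/((1 − ρ)·f_min)]^d · vol(X) / C` where `C = π^{d/2}/Γ(d/2 + 1)`. -/
theorem bpgrad_convergence_within_finite_samples
    {d T : ℕ} (hd : 1 ≤ d) (hT : 1 ≤ T)
    (L ρ : ℝ) (hL : 0 < L) (hρ0 : 0 ≤ ρ) (hρ1 : ρ < 1)
    (X : Set (EuclideanSpace ℝ (Fin d))) (hXm : MeasurableSet X)
    (hXfin : volume X ≠ ⊤)
    (f : EuclideanSpace ℝ (Fin d) → ℝ) (hf0 : ∀ x, 0 ≤ f x)
    (x : ℕ → EuclideanSpace ℝ (Fin d)) (hxX : ∀ t, 1 ≤ t → t ≤ T → x t ∈ X)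
    (hrule : ∀ t, ∀ ht : 1 ≤ t, t ≤ T - 1 → ∀ i, 1 ≤ i → i ≤ t →
      f (x i) - L * ‖x i - x (t + 1)‖ ≤
        ρ * ((Finset.Icc 1 t).inf' (Finset.nonempty_Icc.mpr ht) fun k => f (x k)))
    (fmin : ℝ)
    (hfmin : fmin = (Finset.Icc 1 T).inf' (Finset.nonempty_Icc.mpr hT) fun i => f (x i))
    (hfminpos : 0 < fmin)
    (hball : ∀ t, 1 ≤ t → t ≤ T →
      Metric.ball (x t) ((1 - ρ) * fmin / (2 * L)) ⊆ X)
    (C : ℝ) (hC : C = Real.pi ^ ((d : ℝ) / 2) / Real.Gamma ((d : ℝ) / 2 + 1)) :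
    (T : ℝ) ≤ (2 * L / ((1 - ρ) * fmin)) ^ d * (volume X).toReal / C := by
  have hrho : 0 < 1 - ρ := by linarith
  set r : ℝ := (1 - ρ) * fmin / (2 * L) with hr
  have hrpos : 0 < r := by positivity
  have hCpos : 0 < C := by
    rw [hC]
    have : 0 < Real.Gamma ((d : ℝ) / 2 + 1) := Real.Gamma_pos_of_pos (by positivity)
    have := Real.pi_pos
    positivity
  have hsep : ∀ i j, 1 ≤ i → i < j → j ≤ T → 2 * r ≤ dist (x i) (x j) := by
    intro i j hi hij hj
    obtain ⟨t, rfl⟩ : ∃ t, j = t + 1 := ⟨j - 1, by omega⟩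
    have h1 := hrule t (by omega) (by omega) i hi (by omega)
    have h2 : ((Finset.Icc 1 t).inf' (Finset.nonempty_Icc.mpr (by omega)) fun k => f (x k))
        ≤ f (x i) :=
      Finset.inf'_le (fun k => f (x k)) (Finset.mem_Icc.mpr ⟨hi, by omega⟩)
    have h3 : fmin ≤ f (x i) := by
      rw [hfmin]
      exact Finset.inf'_le (fun k => f (x k)) (Finset.mem_Icc.mpr ⟨hi, by omega⟩)
    have h4 := mul_le_mul_of_nonneg_left h2 hρ0
    have h5 := mul_le_mul_of_nonneg_left h3 hrho.le
    have h6 : 2 * r = (1 - ρ) * fmin / L := by rw [hr]; field_simp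
    rw [h6, dist_eq_norm, div_le_iff₀ hL]
    linarith
  have hdisj : ∀ i j, 1 ≤ i → i < j → j ≤ T →
      Disjoint (Metric.ball (x i) r) (Metric.ball (x j) r) := by
    intro i j hi hij hj
    apply Metric.ball_disjoint_ball
    linarith [hsep i j hi hij hj]
  have hpd : (↑(Finset.Icc 1 T) : Set ℕ).PairwiseDisjoint (fun t => Metric.ball (x t) r) := by
    intro i hi j hj hne
    simp only [Finset.coe_Icc, Set.mem_Icc] at hi hj
    rcases lt_or_gt_of_ne hne with h | h
    · exact hdisj i j hi.1 h hj.2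
    · exact (hdisj j i hj.1 h hi.2).symm
  have hvol : ∀ t, (volume (Metric.ball (x t) r)) = ENNReal.ofReal (r ^ d * C) := by
    intro t
    haveI : Nonempty (Fin d) := ⟨⟨0, hd⟩⟩
    rw [EuclideanSpace.volume_ball, Fintype.card_fin, ENNReal.ofReal_mul (by positivity),
      ENNReal.ofReal_pow hrpos.le, hC, Real.sqrt_eq_rpow, ← Real.rpow_natCast,
      ← Real.rpow_mul Real.pi_pos.le]
    congr 4
    ring
  have hsum : ∑ t ∈ Finset.Icc 1 T, volume (Metric.ball (x t) r) ≤ volume X := by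
    rw [← measure_biUnion_finset hpd (fun t _ => measurableSet_ball)]
    apply measure_mono
    apply Set.iUnion₂_subset
    intro t ht
    rw [Finset.mem_Icc] at ht
    exact hball t ht.1 ht.2
  have hmain : (T : ℝ) * (r ^ d * C) ≤ (volume X).toReal := by
    have := ENNReal.toReal_mono hXfin hsum
    simpa [hvol, ENNReal.toReal_mul, ENNReal.toReal_ofReal (show 0 ≤ r ^ d * C by positivity)]
      using this
  have hinv : 2 * L / ((1 - ρ) * fmin) = r⁻¹ := by rw [hr, inv_div]
  rw [hinv, le_div_iff₀ hCpos, inv_pow, ← div_eq_inv_mul, le_div_iff₀ (by positivity)]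
  linarith
end

section
/- (Theorem 3, Global Property Preservation.) Let f : ℝ^d → ℝ be Lipschitz continuous with constant L > 0 and nonnegative, let x_1, …, x_t ∈ ℝ^d, let 0 ≤ ρ < 1, and set m = min_{i=1,…,t} f(x_i). Suppose f is differentiable at x_t with gradient ∇f(x_t) ≠ 0, and define the normalized gradient ∇f̃(x_t) = ∇f(x_t)/‖∇f(x_t)‖, the step size η_t = (f(x_t) − ρ·m)/L, and the update x_{t+1} = x_t − η_t·∇f̃(x_t). If ⟨x_i − x_t, ∇f̃(x_t)⟩ ≥ (f(x_i) − f(x_t))/L for every i = 1, …, t, then x_{t+1} satisfies the sampling rule: max_{i=1,…,t} { f(x_i) − L·‖x_i − x_{t+1}‖ } ≤ ρ·m, i.e., ‖x_i − x_{t+1}‖ ≥ (f(x_i) − ρ·m)/L for every i = 1, …, t. -/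
open scoped RealInnerProductSpace

/-- Theorem 3, Global Property Preservation: Let `f : ℝ^d → ℝ` be
Lipschitz with constant `L > 0` and nonnegative, samples `x_1, …, x_t` (1-indexed),
`0 ≤ ρ < 1`, `m = min_{i=1,…,t} f(x_i)`. Suppose `f` has gradient `g ≠ 0` at `x_t`,
let `g̃ = g/‖g‖`, `η_t = (f(x_t) − ρ·m)/L`, and `x_{t+1} = x_t − η_t·g̃`. If
`⟨x_i − x_t, g̃⟩ ≥ (f(x_i) − f(x_t))/L` for every `i = 1, …, t`, then the sampling
rule holds: `‖x_i − x_{t+1}‖ ≥ (f(x_i) − ρ·m)/L` for every `i = 1, …, t`. -/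
theorem bpgrad_global_property_preservation
    {d : ℕ} (f : EuclideanSpace ℝ (Fin d) → ℝ) (L : ℝ) (hL : 0 < L)
    (hf : ∀ x y : EuclideanSpace ℝ (Fin d), |f x - f y| ≤ L * ‖x - y‖)
    (hf0 : ∀ x, 0 ≤ f x)
    (t : ℕ) (ht : 1 ≤ t) (x : ℕ → EuclideanSpace ℝ (Fin d))
    (ρ : ℝ) (hρ0 : 0 ≤ ρ) (hρ1 : ρ < 1)
    (m : ℝ) (hm : m = (Finset.Icc 1 t).inf' (Finset.nonempty_Icc.mpr ht) fun i => f (x i))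
    (g : EuclideanSpace ℝ (Fin d)) (hgrad : HasGradientAt f g (x t)) (hg0 : g ≠ 0)
    (gt : EuclideanSpace ℝ (Fin d)) (hgt : gt = ‖g‖⁻¹ • g)
    (η : ℝ) (hη : η = (f (x t) - ρ * m) / L)
    (hcond : ∀ i, 1 ≤ i → i ≤ t → (f (x i) - f (x t)) / L ≤ ⟪x i - x t, gt⟫) :
    ∀ i, 1 ≤ i → i ≤ t → (f (x i) - ρ * m) / L ≤ ‖x i - (x t - η • gt)‖ := by
  intro i h1 h2
  have hn : ‖gt‖ = 1 := by
    rw [hgt, norm_smul, norm_inv, norm_norm]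
    exact inv_mul_cancel₀ (norm_ne_zero_iff.mpr hg0)
  have hc := hcond i h1 h2
  have hcs := real_inner_le_norm (x i - (x t - η • gt)) gt
  have e : x i - (x t - η • gt) = (x i - x t) + η • gt := by abel
  have key : ⟪x i - (x t - η • gt), gt⟫ = ⟪x i - x t, gt⟫ + η := by
    rw [e, inner_add_left, real_inner_smul_left, real_inner_self_eq_norm_sq, hn]
    ring
  rw [key, hn, mul_one] at hcs
  have e2 : (f (x i) - ρ * m) / L = (f (x i) - f (x t)) / L + η := by
    rw [hη]; ring
  linarith
end

section
/- (Full-sequence sampling-rule preservation of the BPGrad solver.) Let f : ℝ^d → ℝ be Lipschitz continuous with constant L > 0 and nonnegative, let 0 ≤ ρ < 1, and let x_1, x_2, …, x_T ∈ ℝ^d be generated iteratively by x_{t+1} = x_t − η_t·∇f̃(x_t), where f is differentiable at each x_t with ∇f(x_t) ≠ 0, ∇f̃(x_t) = ∇f(x_t)/‖∇f(x_t)‖, and η_t = (f(x_t) − ρ·min_{i=1,…,t} f(x_i))/L. If at every step t (1 ≤ t ≤ T − 1) the condition ⟨x_i − x_t, ∇f̃(x_t)⟩ ≥ (f(x_i)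 − f(x_t))/L holds for all i = 1, …, t, then the whole sequence satisfies the sampling rule: for every t with 1 ≤ t ≤ T − 1 and every i = 1, …, t, ‖x_i − x_{t+1}‖ ≥ (f(x_i) − ρ·min_{k=1,…,t} f(x_k))/L. -/
open scoped RealInnerProductSpace

/-- Full-sequence sampling-rule preservation of the BPGrad solver:
Let `f : ℝ^d → ℝ` be Lipschitz with constant `L > 0` and nonnegative, `0 ≤ ρ < 1`,
and let `x_1, …, x_T` (1-indexed) be generated iteratively by
`x_{t+1} = x_t − η_t·g̃_t`, where `f` has nonzero gradient `g_t` at `x_t`,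
`g̃_t = g_t/‖g_t‖`, and `η_t = (f(x_t) − ρ·min_{k=1,…,t} f(x_k))/L`. If at every
step `1 ≤ t ≤ T − 1` the condition `⟨x_i − x_t, g̃_t⟩ ≥ (f(x_i) − f(x_t))/L` holds
for all `i = 1, …, t`, then the whole sequence satisfies the sampling rule: for
every `1 ≤ t ≤ T − 1` and every `i = 1, …, t`,
`‖x_i − x_{t+1}‖ ≥ (f(x_i) − ρ·min_{k=1,…,t} f(x_k))/L`. -/
theorem bpgrad_full_sequence_sampling_rule
    {d T : ℕ} (f : EuclideanSpace ℝ (Fin d) → ℝ) (L : ℝ) (hL : 0 < L)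
    (hf : ∀ x y : EuclideanSpace ℝ (Fin d), |f x - f y| ≤ L * ‖x - y‖)
    (hf0 : ∀ x, 0 ≤ f x)
    (ρ : ℝ) (hρ0 : 0 ≤ ρ) (hρ1 : ρ < 1)
    (x g : ℕ → EuclideanSpace ℝ (Fin d))
    (hgrad : ∀ t, 1 ≤ t → t ≤ T - 1 → HasGradientAt f (g t) (x t))
    (hg0 : ∀ t, 1 ≤ t → t ≤ T - 1 → g t ≠ 0)
    (hiter : ∀ t, ∀ ht : 1 ≤ t, t ≤ T - 1 →
      x (t + 1) = x t -
        (((f (x t) - ρ * ((Finset.Icc 1 t).inf' (Finset.nonempty_Icc.mpr ht)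
            fun k => f (x k))) / L) • (‖g t‖⁻¹ • g t)))
    (hcond : ∀ t, 1 ≤ t → t ≤ T - 1 → ∀ i, 1 ≤ i → i ≤ t →
      (f (x i) - f (x t)) / L ≤ ⟪x i - x t, ‖g t‖⁻¹ • g t⟫) :
    ∀ t, ∀ ht : 1 ≤ t, t ≤ T - 1 → ∀ i, 1 ≤ i → i ≤ t →
      (f (x i) - ρ * ((Finset.Icc 1 t).inf' (Finset.nonempty_Icc.mpr ht)
          fun k => f (x k))) / L ≤ ‖x i - x (t + 1)‖ := by
  intro t ht htT i hi hit
  have hc := hcond t ht htT i hi hit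
  have hu : ‖‖g t‖⁻¹ • g t‖ = 1 := by
    rw [norm_smul, norm_inv, norm_norm]
    exact inv_mul_cancel₀ (norm_ne_zero_iff.mpr (hg0 t ht htT))
  rw [hiter t ht htT]
  generalize ((Finset.Icc 1 t).inf' (Finset.nonempty_Icc.mpr ht) fun k => f (x k)) = m
  generalize ‖g t‖⁻¹ • g t = u at hc hu ⊢
  have h1 := real_inner_le_norm (x i - (x t - ((f (x t) - ρ * m) / L) • u)) u
  have h2 : x i - (x t - ((f (x t) - ρ * m) / L) • u)
      = (x i - x t) + ((f (x t) - ρ * m) / L) • u := by abel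
  have h3 : ⟪x i - (x t - ((f (x t) - ρ * m) / L) • u), u⟫
      = ⟪x i - x t, u⟫ + (f (x t) - ρ * m) / L := by
    rw [h2, inner_add_left, real_inner_smul_left, real_inner_self_eq_norm_sq, hu]
    ring
  rw [hu, mul_one, h3] at h1
  have h4 : (f (x i) - ρ * m) / L = (f (x i) - f (x t)) / L + (f (x t) - ρ * m) / L := by ring
  linarith
end

section
/- (Finite length of BPGrad solver trajectories.) Let d ≥ 1, L > 0, 0 ≤ ρ < 1, let X ⊆ ℝ^d be a measurable set of finite Lebesgue volume V_X, and let f : ℝ^d → ℝ be Lipschitz continuous with constant L and nonnegative. Suppose x_1, …, x_T ∈ X are generated by x_{t+1} = x_t − η_t·∇f̃(x_t) with η_t = (f(x_t) − ρ·min_{i=1,…,t} f(x_i))/L, where f is differentiable with ∇f(x_t) ≠ 0 at each x_t, and at every step t the condition ⟨x_i − x_t, ∇f̃(x_t)⟩ ≥ (f(x_i) − f(x_t))/L holds for all i ≤ t. Set f_min = min_{i=1,…,T} f(x_i), assume f_min > 0, and assume the open ball B(x_t, (1−ρ)·f_min/(2L)) is contained in X for each t. Then T ≤ [2L / ((1 −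 ρ)·f_min)]^d · V_X / C, where C = π^{d/2} / Γ(d/2 + 1). -/
open MeasureTheory
open scoped RealInnerProductSpace

/-- Finite length of BPGrad solver trajectories: Let `d ≥ 1`,
`L > 0`, `0 ≤ ρ < 1`, `X ⊆ ℝ^d` measurable of finite Lebesgue volume, and
`f : ℝ^d → ℝ` Lipschitz with constant `L` and nonnegative. Suppose
`x_1, …, x_T ∈ X` (1-indexed) are generated by `x_{t+1} = x_t − η_t·g̃_t` with
`η_t = (f(x_t) − ρ·min_{k=1,…,t} f(x_k))/L`, where `f` has nonzero gradient `g_t`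
at each `x_t` and at every step `t` the condition
`⟨x_i − x_t, g̃_t⟩ ≥ (f(x_i) − f(x_t))/L` holds for all `i ≤ t`. With
`f_min = min_{i=1,…,T} f(x_i) > 0` and `B(x_t, (1−ρ)·f_min/(2L)) ⊆ X` for each `t`,
one has `T ≤ [2L/((1 − ρ)·f_min)]^d · vol(X) / C` where `C = π^{d/2}/Γ(d/2 + 1)`. -/
theorem bpgrad_solver_finite_trajectory
    {d T : ℕ} (hd : 1 ≤ d) (hT : 1 ≤ T)
    (L ρ : ℝ) (hL : 0 < L) (hρ0 : 0 ≤ ρ) (hρ1 : ρ < 1)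
    (X : Set (EuclideanSpace ℝ (Fin d))) (hXm : MeasurableSet X)
    (hXfin : volume X ≠ ⊤)
    (f : EuclideanSpace ℝ (Fin d) → ℝ)
    (hf : ∀ x y : EuclideanSpace ℝ (Fin d), |f x - f y| ≤ L * ‖x - y‖)
    (hf0 : ∀ x, 0 ≤ f x)
    (x g : ℕ → EuclideanSpace ℝ (Fin d))
    (hxX : ∀ t, 1 ≤ t → t ≤ T → x t ∈ X)
    (hgrad : ∀ t, 1 ≤ t → t ≤ T - 1 → HasGradientAt f (g t) (x t))
    (hg0 : ∀ t, 1 ≤ t → t ≤ T - 1 → g t ≠ 0)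
    (hiter : ∀ t, ∀ ht : 1 ≤ t, t ≤ T - 1 →
      x (t + 1) = x t -
        (((f (x t) - ρ * ((Finset.Icc 1 t).inf' (Finset.nonempty_Icc.mpr ht)
            fun k => f (x k))) / L) • (‖g t‖⁻¹ • g t)))
    (hcond : ∀ t, 1 ≤ t → t ≤ T - 1 → ∀ i, 1 ≤ i → i ≤ t →
      (f (x i) - f (x t)) / L ≤ ⟪x i - x t, ‖g t‖⁻¹ • g t⟫)
    (fmin : ℝ)
    (hfmin : fmin = (Finset.Icc 1 T).inf' (Finset.nonempty_Icc.mpr hT) fun i => f (x i))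
    (hfminpos : 0 < fmin)
    (hball : ∀ t, 1 ≤ t → t ≤ T →
      Metric.ball (x t) ((1 - ρ) * fmin / (2 * L)) ⊆ X)
    (C : ℝ) (hC : C = Real.pi ^ ((d : ℝ) / 2) / Real.Gamma ((d : ℝ) / 2 + 1)) :
    (T : ℝ) ≤ (2 * L / ((1 - ρ) * fmin)) ^ d * (volume X).toReal / C := by
  have h1ρ : 0 < 1 - ρ := by linarith
  set r : ℝ := (1 - ρ) * fmin / (2 * L) with hr
  have hrpos : 0 < r := by positivity
  have hle : ∀ i, 1 ≤ i → i ≤ T → fmin ≤ f (x i) := by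
    intro i h1 h2
    rw [hfmin]
    exact Finset.inf'_le (fun i => f (x i)) (Finset.mem_Icc.mpr ⟨h1, h2⟩)
  have hsep : ∀ i t, 1 ≤ i → i ≤ t → t ≤ T - 1 → 2 * r ≤ ‖x i - x (t + 1)‖ := by
    intro i t hi hit htT
    have ht : 1 ≤ t := hi.trans hit
    have hg := hg0 t ht htT
    have hc := hcond t ht htT i hi hit
    have hx := hiter t ht htT
    have hm : ((Finset.Icc 1 t).inf' (Finset.nonempty_Icc.mpr ht) fun k => f (x k)) ≤ f (x i) :=
      Finset.inf'_le (fun i => f (x i)) (Finset.mem_Icc.mpr ⟨hi, hit⟩)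
    generalize ((Finset.Icc 1 t).inf' (Finset.nonempty_Icc.mpr ht) fun k => f (x k)) = m at hm hx
    have hu : ‖‖g t‖⁻¹ • g t‖ = 1 := norm_smul_inv_norm (𝕜 := ℝ) hg
    generalize ‖g t‖⁻¹ • g t = u at hu hc hx
    have hin : ⟪x i - x (t + 1), u⟫ = ⟪x i - x t, u⟫ + (f (x t) - ρ * m) / L := by
      rw [hx, sub_sub_eq_add_sub, add_sub_right_comm, inner_add_left, real_inner_smul_left,
        real_inner_self_eq_norm_sq, hu]
      ring
    have hcs := real_inner_le_norm (x i - x (t + 1)) u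
    rw [hu, mul_one, hin] at hcs
    have hfi := hle i hi (by omega)
    have h2r : 2 * r = ((1 - ρ) * fmin) / L := by rw [hr]; field_simp
    have : ((1 - ρ) * fmin) / L ≤ (f (x i) - f (x t)) / L + (f (x t) - ρ * m) / L := by
      rw [← add_div]
      apply div_le_div_of_nonneg_right _ hL.le
      nlinarith [mul_le_mul_of_nonneg_left hm hρ0, mul_le_mul_of_nonneg_left hfi h1ρ.le]
    linarith
  have hdisj' : ∀ i j, 1 ≤ i → i < j → j ≤ T →
      Disjoint (Metric.ball (x i) r) (Metric.ball (x j) r) := by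
    intro i j hi hij hj
    apply Metric.ball_disjoint_ball
    have := hsep i (j - 1) hi (by omega) (by omega)
    rw [Nat.sub_add_cancel (by omega)] at this
    rw [dist_eq_norm]
    linarith
  have hdisj : Set.PairwiseDisjoint (↑(Finset.Icc 1 T)) fun i => Metric.ball (x i) r := by
    intro i hi j hj hij
    simp only [Finset.coe_Icc, Set.mem_Icc] at hi hj
    rcases lt_or_gt_of_ne hij with h | h
    · exact hdisj' i j hi.1 h hj.2
    · exact (hdisj' j i hj.1 h hi.2).symm
  have hCpos : 0 < C := by
    rw [hC]
    have := Real.Gamma_pos_of_pos (show 0 < (d : ℝ) / 2 + 1 by positivity)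
    have := Real.pi_pos
    positivity
  have hvol : ∀ y : EuclideanSpace ℝ (Fin d), volume.real (Metric.ball y r) = r ^ d * C := by
    intro y
    have hs : √Real.pi ^ d = Real.pi ^ ((d : ℝ) / 2) := by
      rw [Real.sqrt_eq_rpow, ← Real.rpow_natCast, ← Real.rpow_mul Real.pi_pos.le]
      congr 1
      ring
    haveI : Nonempty (Fin d) := ⟨⟨0, hd⟩⟩
    rw [measureReal_def, EuclideanSpace.volume_ball, Fintype.card_fin, hs, ← hC,
      ENNReal.toReal_mul, ENNReal.toReal_pow, ENNReal.toReal_ofReal hrpos.le,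
      ENNReal.toReal_ofReal hCpos.le]
  have hsub : (⋃ i ∈ Finset.Icc 1 T, Metric.ball (x i) r) ⊆ X := by
    apply Set.iUnion₂_subset
    intro i hi
    rw [Finset.mem_Icc] at hi
    exact hball i hi.1 hi.2
  have hmain := measureReal_mono (μ := volume) hsub hXfin
  rw [measureReal_biUnion_finset hdisj (fun i _ => measurableSet_ball)
    (fun i _ => measure_ball_lt_top.ne)] at hmain
  simp only [hvol, Finset.sum_const, Nat.card_Icc, Nat.add_sub_cancel, nsmul_eq_mul] at hmain
  have hinv : 2 * L / ((1 - ρ) * fmin) = r⁻¹ := by rw [hr, inv_div]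
  rw [hinv, le_div_iff₀ hCpos, inv_pow, ← div_eq_inv_mul, le_div_iff₀ (by positivity)]
  rw [measureReal_def] at hmain
  linarith
end
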